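/- Strong minimum principle for the Heckman–Opdam heat operator: let t₀ ∈ ℝ and let u : a × [t₀, ∞) → ℝ be continuous, C^{2,1} on a × (t₀, ∞), and satisfy (i) ∂_t u(x,t) − D u(·,t)(x) ≥ 0 for every regular x ∈ a and every t > t₀, (ii) u ≥ 0 on a × [t₀, ∞), and (iii) u(0, t) > 0 for every t ≥ t₀. Then u(x,t) > 0 for every x ∈ a and every t > t₀. -/

import Mathlib

open scoped BigOperators RealInnerProductSpace Classical

noncomputable section

variable {E : Type*} [NormedAddCommGroup E] [InnerProductSpace ℝ E] [FiniteDimensional ℝ E]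

/-- The coroot `α∨ = 2α/|α|²`. -/
def coroot (α : E) : E := (2 / ⟪α, α⟫) • α

/-- The orthogonal reflection `r_α x = x - (α∨, x) α`. -/
def rRefl (α : E) (x : E) : E := x - ⟪coroot α, x⟫ • α

/-- Data of an integral root system with positive subsystem and
a Weyl-invariant positive multiplicity function. -/
structure HOData (E : Type*) [NormedAddCommGroup E] [InnerProductSpace ℝ E] : Type _ where
  R : Finset E
  Rpos : Finset E
  k : E → ℝ
  k_pos : ∀ α ∈ R, 0 < k α
  root_ne_zero : ∀ α ∈ R, α ≠ 0
  pos_subset : Rpos ⊆ R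
  pos_char : ∃ u : E, ∀ α ∈ R, (α ∈ Rpos ↔ 0 < ⟪α, u⟫)
  pos_or_neg : ∀ α ∈ R, α ∈ Rpos ∨ -α ∈ Rpos
  neg_mem : ∀ α ∈ R, -α ∈ R
  integral : ∀ α ∈ R, ∀ β ∈ R, ∃ n : ℤ, ⟪coroot α, β⟫ = (n : ℝ)
  refl_mem : ∀ α ∈ R, ∀ β ∈ R, rRefl α β ∈ R
  k_inv : ∀ α ∈ R, ∀ β ∈ R, k (rRefl α β) = k β

/-- The Weyl group: the subgroup of linear isometries generated by the root reflections. -/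
def weylGroup (D : HOData E) : Subgroup (E ≃ₗᵢ[ℝ] E) :=
  Subgroup.closure {w : E ≃ₗᵢ[ℝ] E | ∃ α ∈ D.R, ∀ x, w x = rRefl α x}

/-- `ρ = (1/2) Σ_{α ∈ R⁺} k_α α`. -/
def rhoHO (D : HOData E) : E := (2:ℝ)⁻¹ • ∑ α ∈ D.Rpos, D.k α • α

/-- Regular points. -/
def HORegular (D : HOData E) (x : E) : Prop := ∀ α ∈ D.R, ⟪α, x⟫ ≠ 0

/-- The (open) positive Weyl chamber. -/
def posChamber (D : HOData E) : Set E := {x | ∀ α ∈ D.Rpos, 0 < ⟪α, x⟫}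

/-- The positive indivisible roots `R₀⁺`. -/
def Rpos0 (D : HOData E) : Finset E := D.Rpos.filter (fun α => (2:ℝ)⁻¹ • α ∉ D.R)

/-- The Opdam function `G_λ` for a real parameter `λ`: an analytic function,
normalized at `0`, satisfying the Cherednik differential-difference system. -/
def IsOpdamR (D : HOData E) (lam : E) (G : E → ℝ) : Prop :=
  AnalyticOnNhd ℝ G Set.univ ∧ G 0 = 1 ∧
  ∀ ξ x, HORegular D x →
    fderiv ℝ G x ξ =
      (∑ α ∈ D.Rpos, D.k α * ⟪α, ξ⟫ / (1 - Real.exp (-⟪α, x⟫)) * (G (rRefl α x) - G x))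
      + ⟪rhoHO D + lam, ξ⟫ * G x

/-- The Opdam function `G_λ` for a complex parameter `λ = l1 + i l2 ∈ h`. -/
def IsOpdamC (D : HOData E) (l1 l2 : E) (G : E → ℂ) : Prop :=
  AnalyticOnNhd ℝ G Set.univ ∧ G 0 = 1 ∧
  ∀ ξ x, HORegular D x →
    fderiv ℝ G x ξ =
      (∑ α ∈ D.Rpos, ((D.k α * ⟪α, ξ⟫ / (1 - Real.exp (-⟪α, x⟫)) : ℝ) : ℂ)
          * (G (rRefl α x) - G x))
      + (((⟪rhoHO D + l1, ξ⟫ : ℝ) : ℂ) + Complex.I * ((⟪l2, ξ⟫ : ℝ) : ℂ)) * G x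

/-- The symmetrization `F(x) = |W|⁻¹ Σ_{w ∈ W} G(w x)` (real valued case). -/
def Fsym (D : HOData E) [Fintype (weylGroup D)] (G : E → ℝ) (x : E) : ℝ :=
  (Fintype.card (weylGroup D) : ℝ)⁻¹ * ∑ w : weylGroup D, G (w.1 x)

/-- The symmetrization `F(x) = |W|⁻¹ Σ_{w ∈ W} G(w x)` (complex valued case). -/
def FsymC (D : HOData E) [Fintype (weylGroup D)] (G : E → ℂ) (x : E) : ℂ :=
  (Fintype.card (weylGroup D) : ℂ)⁻¹ * ∑ w : weylGroup D, G (w.1 x)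

/-- `max_{w ∈ W} (w λ, x)`. -/
def maxW (D : HOData E) [Fintype (weylGroup D)] (lam x : E) : ℝ :=
  ⨆ w : weylGroup D, ⟪w.1 lam, x⟫

/-- The Euclidean Laplacian, as the trace of the second derivative. -/
def eucLap (f : E → ℝ) (x : E) : ℝ :=
  ∑ i, iteratedFDeriv ℝ 2 f x (fun _ => stdOrthonormalBasis ℝ E i)

/-- Hyperbolic cotangent. -/
def cothR (a : ℝ) : ℝ := Real.cosh a / Real.sinh a

/-- The Heckman–Opdam Laplacian `L`. -/
def HOLap (D : HOData E) (f : E → ℝ) (x : E) : ℝ :=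
  eucLap f x + (∑ α ∈ D.Rpos, D.k α * cothR (⟪α, x⟫ / 2) * fderiv ℝ f x α)
    + ‖rhoHO D‖ ^ 2 * f x
    - ∑ α ∈ D.Rpos,
        D.k α * (‖α‖ ^ 2 / (4 * Real.sinh (⟪α, x⟫ / 2) ^ 2)) * (f x - f (rRefl α x))

/-- The modified Laplacian `D = (1/2)(L - |ρ|²)`. -/
def DOp (D : HOData E) (f : E → ℝ) (x : E) : ℝ :=
  (2 : ℝ)⁻¹ * (HOLap D f x - ‖rhoHO D‖ ^ 2 * f x)

set_option linter.unusedSectionVars false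

/-- The convex Weyl-invariant function `x ↦ Σ_{β ∈ R} |(β, x)|`, which has a kink along every wall. -/
def wallFn (D : HOData E) (x : E) : ℝ := ∑ β ∈ D.R, |⟪β, x⟫|

/-- A subgradient of `wallFn` at `x`, evaluated in the direction `e`. -/
def wallSlope (D : HOData E) (x e : E) : ℝ :=
  ∑ β ∈ D.R, (SignType.sign ⟪β, x⟫ : ℝ) * ⟪β, e⟫

lemma continuous_wallFn (D : HOData E) : Continuous (wallFn D) := by
  unfold wallFn; fun_prop

lemma wallFn_le (D : HOData E) (x : E) : wallFn D x ≤ (∑ β ∈ D.R, ‖β‖) * ‖x‖ := by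
  rw [wallFn, Finset.sum_mul]
  exact Finset.sum_le_sum fun β _ => abs_real_inner_le_norm β x

lemma wallFn_nonneg (D : HOData E) (x : E) : 0 ≤ wallFn D x :=
  Finset.sum_nonneg fun _ _ => abs_nonneg _

lemma abs_add_sign_mul_le (a b : ℝ) : |a| + (SignType.sign a : ℝ) * b ≤ |a + b| := by
  rcases lt_trichotomy a 0 with h | h | h
  · rw [sign_neg h, abs_of_neg h]
    simp only [SignType.coe_neg, SignType.coe_one]
    linarith [neg_abs_le (a + b)]
  · simp [h]
  · rw [sign_pos h, abs_of_pos h]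
    simp only [SignType.coe_one]
    linarith [le_abs_self (a + b)]

lemma wallSlope_smul (D : HOData E) (x e : E) (s : ℝ) :
    wallSlope D x (s • e) = s * wallSlope D x e := by
  simp only [wallSlope, inner_smul_right, Finset.mul_sum]
  exact Finset.sum_congr rfl fun _ _ => by ring

lemma wallFn_add_wallSlope_le (D : HOData E) (x e : E) :
    wallFn D x + wallSlope D x e ≤ wallFn D (x + e) := by
  simp only [wallFn, wallSlope, ← Finset.sum_add_distrib, inner_add_right]
  exact Finset.sum_le_sum fun β _ => abs_add_sign_mul_le _ _

lemma wallFn_add_wallSlope_add_le (D : HOData E) (x e : E) {β : E} (hβ : β ∈ D.R)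
    (hx : ⟪β, x⟫ = 0) :
    wallFn D x + (wallSlope D x e + ⟪β, e⟫) ≤ wallFn D (x + e) := by
  have h : ⟪β, e⟫ = ∑ γ ∈ D.R, if γ = β then ⟪β, e⟫ else 0 := by simp [hβ]
  rw [h]
  simp only [wallFn, wallSlope, ← Finset.sum_add_distrib, inner_add_right]
  refine Finset.sum_le_sum fun γ _ => ?_
  split_ifs with hγ
  · subst hγ
    simp [hx, le_abs_self]
  · simpa using abs_add_sign_mul_le ⟪γ, x⟫ ⟪γ, e⟫

lemma inner_rRefl (α x y : E) : ⟪x, rRefl α y⟫ = ⟪rRefl α x, y⟫ := by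
  simp only [rRefl, coroot, inner_sub_right, inner_sub_left, inner_smul_left, inner_smul_right,
    RCLike.conj_to_real, real_inner_comm x α]
  ring

lemma rRefl_rRefl (α x : E) : rRefl α (rRefl α x) = x := by
  rcases eq_or_ne α 0 with rfl | h
  · simp [rRefl]
  have h' : ⟪α, α⟫ ≠ 0 := inner_self_ne_zero.2 h
  have : ⟪coroot α, rRefl α x⟫ = -⟪coroot α, x⟫ := by
    simp only [rRefl, coroot, inner_sub_right, inner_smul_left, inner_smul_right,
      RCLike.conj_to_real]
    field_simp
    ring
  rw [rRefl, this, rRefl]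
  module

lemma norm_rRefl (α x : E) : ‖rRefl α x‖ = ‖x‖ := by
  have h : ‖rRefl α x‖ ^ 2 = ‖x‖ ^ 2 := by
    rw [← real_inner_self_eq_norm_sq, inner_rRefl, rRefl_rRefl, real_inner_self_eq_norm_sq]
  exact (sq_eq_sq₀ (norm_nonneg _) (norm_nonneg _)).1 h

lemma wallFn_rRefl (D : HOData E) {α : E} (hα : α ∈ D.R) (x : E) :
    wallFn D (rRefl α x) = wallFn D x :=
  Finset.sum_nbij' (rRefl α) (rRefl α) (fun β hβ => D.refl_mem α hα β hβ)
    (fun β hβ => D.refl_mem α hα β hβ) (fun β _ => rRefl_rRefl α β)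
    (fun β _ => rRefl_rRefl α β) (fun β _ => by rw [inner_rRefl])

lemma inner_mul_wallSlope_nonneg (D : HOData E) {α : E} (hα : α ∈ D.R) (x : E) :
    0 ≤ ⟪α, x⟫ * wallSlope D x α := by
  have h := wallFn_add_wallSlope_le D x ((-⟪coroot α, x⟫) • α)
  have e : x + (-⟪coroot α, x⟫) • α = rRefl α x := by rw [rRefl]; module
  rw [e, wallFn_rRefl D hα, wallSlope_smul, coroot, inner_smul_left, RCLike.conj_to_real] at h
  have hp : 0 < 2 / ⟪α, α⟫ := div_pos two_pos (real_inner_self_pos.2 (D.root_ne_zero α hα))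
  have h2 : 0 ≤ (2 / ⟪α, α⟫) * (⟪α, x⟫ * wallSlope D x α) := by linarith
  exact nonneg_of_mul_nonneg_right h2 hp

lemma cothR_neg (z : ℝ) : cothR (-z) = -cothR z := by
  simp [cothR, div_neg]

lemma cothR_mul_self_le (z : ℝ) : cothR z * z ≤ 1 + |z| := by
  have key : ∀ z : ℝ, 0 < z → cothR z * z ≤ 1 + z := fun z hz => by
    have hs : 0 < Real.sinh z := Real.sinh_pos_iff.2 hz
    have h1 : z ≤ Real.sinh z := Real.self_le_sinh_iff.2 hz.le
    have h2 : Real.exp (-z) ≤ 1 := Real.exp_le_one_iff.2 (by linarith)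
    have h3 : Real.cosh z - Real.sinh z = Real.exp (-z) := Real.cosh_sub_sinh z
    rw [cothR, div_mul_eq_mul_div, div_le_iff₀ hs]
    nlinarith
  rcases lt_trichotomy z 0 with h | rfl | h
  · have := key (-z) (by linarith)
    rw [cothR_neg] at this
    rw [abs_of_neg h]; linarith
  · simp
  · rw [abs_of_pos h]; exact key z h

lemma cothR_mul_nonneg {y w : ℝ} (h : 0 ≤ y * w) (hy : y ≠ 0) : 0 ≤ cothR (y / 2) * w := by
  rcases hy.lt_or_gt with hy | hy
  · have : w ≤ 0 := by by_contra hw; push Not at hw; nlinarith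
    refine mul_nonneg_of_nonpos_of_nonpos ?_ this
    exact div_nonpos_of_nonneg_of_nonpos (Real.cosh_pos _).le
      (Real.sinh_nonpos_iff.2 (by linarith))
  · have : 0 ≤ w := nonneg_of_mul_nonneg_right h hy
    exact mul_nonneg (div_nonneg (Real.cosh_pos _).le (Real.sinh_nonneg_iff.2 (by linarith))) this

lemma IsLocalMin.second_deriv_nonneg {φ φ₁ : ℝ → ℝ} {a φ₂ : ℝ}
    (h : IsLocalMin φ a) (h₁ : ∀ s, HasDerivAt φ (φ₁ s) s) (h₂ : HasDerivAt φ₁ φ₂ a) :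
    0 ≤ φ₂ := by
  have hd : deriv φ = φ₁ := funext fun s => (h₁ s).deriv
  by_contra! hneg
  have hmax : IsLocalMax φ a := isLocalMax_of_deriv_deriv_neg (by rw [hd, h₂.deriv]; exact hneg)
    h.deriv_eq_zero (h₁ a).continuousAt
  have hc : φ =ᶠ[nhds a] fun _ => φ a := by
    filter_upwards [h, hmax] with s h1 h2 using le_antisymm h2 h1
  have := hc.deriv.deriv_eq
  rw [hd, h₂.deriv] at this
  simp at this
  linarith

/-- First and second order conditions along the line `x + s e` where `f` minus a Gaussian barrier
minus a linear function has a local minimum. -/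
lemma fderiv_eq_and_le_iteratedFDeriv_of_isLocalMin {f : E → ℝ} (hf : ContDiff ℝ 2 f)
    (x e : E) (η l θ m : ℝ)
    (hmin : IsLocalMin (fun s : ℝ => f (x + s • e)
      - η * Real.exp (-l * (‖x + s • e‖ ^ 2 - θ)) - s * m) 0) :
    fderiv ℝ f x e = η * Real.exp (-l * (‖x‖ ^ 2 - θ)) * (-2 * l * ⟪x, e⟫) + m ∧
    η * Real.exp (-l * (‖x‖ ^ 2 - θ)) * (4 * l ^ 2 * ⟪x, e⟫ ^ 2 - 2 * l * ‖e‖ ^ 2) ≤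
      iteratedFDeriv ℝ 2 f x (fun _ => e) := by
  have hline : ∀ s : ℝ, HasDerivAt (fun s : ℝ => x + s • e) e s := fun s => by
    simpa using ((hasDerivAt_id s).smul_const e).const_add x
  have hf1 : ∀ s : ℝ, HasDerivAt (fun s : ℝ => f (x + s • e)) (fderiv ℝ f (x + s • e) e) s :=
    fun s => ((hf.differentiable two_ne_zero _).hasFDerivAt).comp_hasDerivAt s (hline s)
  have hdf : Differentiable ℝ (fderiv ℝ f) :=
    (hf.fderiv_right (m := 1) (by norm_num)).differentiable one_ne_zero
  have hf2 : HasDerivAt (fun s : ℝ => fderiv ℝ f (x + s • e) e)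
      (iteratedFDeriv ℝ 2 f x (fun _ => e)) 0 := by
    have hc : HasDerivAt (fun s : ℝ => fderiv ℝ f (x + s • e)) (fderiv ℝ (fderiv ℝ f) x e) 0 :=
      (hdf x).hasFDerivAt.comp_hasDerivAt_of_eq 0 (hline 0) (by simp)
    rw [iteratedFDeriv_two_apply]
    simpa using hc.clm_apply (hasDerivAt_const (0 : ℝ) e)
  have hn : ∀ s : ℝ, ‖x + s • e‖ ^ 2 = ‖x‖ ^ 2 + 2 * s * ⟪x, e⟫ + s ^ 2 * ‖e‖ ^ 2 := fun s => by
    rw [norm_add_sq_real, inner_smul_right, norm_smul, mul_pow, Real.norm_eq_abs, sq_abs]; ring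
  have hq : ∀ s : ℝ, HasDerivAt (fun s : ℝ => -l * (‖x + s • e‖ ^ 2 - θ))
      (-2 * l * (⟪x, e⟫ + s * ‖e‖ ^ 2)) s := fun s => by
    simp only [hn]
    have h := (((((hasDerivAt_id s).const_mul 2).mul_const ⟪x, e⟫).const_add (‖x‖ ^ 2)).add
      ((hasDerivAt_pow 2 s).mul_const (‖e‖ ^ 2))).sub_const θ |>.const_mul (-l)
    refine h.congr_deriv ?_
    push_cast
    ring
  have hg1 := fun s : ℝ => (hq s).exp
  have hg2 := (hg1 0).mul
    (((hasDerivAt_id (0 : ℝ)).mul_const (‖e‖ ^ 2)).const_add ⟪x, e⟫ |>.const_mul (-2 * l))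
  have h1 := fun s : ℝ => ((hf1 s).sub ((hg1 s).const_mul η)).sub
    ((hasDerivAt_id s).mul_const m)
  have h2 := (hf2.sub (hg2.const_mul η)).sub_const (1 * m)
  have e1 := hmin.hasDerivAt_eq_zero (h1 0)
  have e2 := IsLocalMin.second_deriv_nonneg hmin h1 h2
  simp only [zero_smul, add_zero, zero_mul, one_mul, id] at e1 e2
  constructor
  · linarith
  · nlinarith

lemma deriv_nonpos_of_forall_le {g : ℝ → ℝ} {g' a t : ℝ} (hat : a < t) (hg : HasDerivAt g g' t)
    (h : ∀ s ∈ Set.Icc a t, g t ≤ g s) : g' ≤ 0 := by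
  have hmem : Set.Ioo a t ∈ nhdsWithin t (Set.Iio t) := Ioo_mem_nhdsLT hat
  have := (hasDerivAt_iff_tendsto_slope.1 hg).mono_left
    (nhdsWithin_mono t (fun s hs => (Set.mem_Iio.1 hs).ne : Set.Iio t ⊆ {t}ᶜ))
  refine le_of_tendsto this ?_
  filter_upwards [hmem] with s hs
  rw [slope_def_field]
  exact div_nonpos_of_nonneg_of_nonpos (by linarith [h s ⟨hs.1.le, hs.2.le⟩]) (by linarith [hs.2])

section Barrier

variable {D : HOData E} {f : E → ℝ} {x : E} {r η l θ ε : ℝ}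

lemma isLocalMin_line_of_forall_le {e : E} {m : ℝ} (hε : 0 ≤ ε) (hxr : ‖x‖ < r)
    (hmin : ∀ y, ‖y‖ ≤ r → f x - η * Real.exp (-l * (‖x‖ ^ 2 - θ)) - ε * wallFn D x ≤
      f y - η * Real.exp (-l * (‖y‖ ^ 2 - θ)) - ε * wallFn D y)
    (hm : ∀ s : ℝ, wallFn D x + s * m ≤ wallFn D (x + s • e)) :
    IsLocalMin (fun s : ℝ => f (x + s • e)
      - η * Real.exp (-l * (‖x + s • e‖ ^ 2 - θ)) - s * (ε * m)) 0 := by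
  have hc : ContinuousAt (fun s : ℝ => ‖x + s • e‖) 0 := by fun_prop
  have hev : ∀ᶠ s : ℝ in nhds 0, ‖x + s • e‖ < r := hc.eventually_lt_const (by simpa using hxr)
  filter_upwards [hev] with s hs
  have h1 := hmin _ hs.le
  have h2 := mul_le_mul_of_nonneg_left (hm s) hε
  simp only [zero_smul, add_zero, zero_mul, sub_zero]
  linarith

/-- The kinks of `wallFn` prevent minima on the walls. -/
lemma hoRegular_of_forall_le (hf : ContDiff ℝ 2 f) (hε : 0 < ε) (hxr : ‖x‖ < r)
    (hmin : ∀ y, ‖y‖ ≤ r → f x - η * Real.exp (-l * (‖x‖ ^ 2 - θ)) - ε * wallFn D x ≤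
      f y - η * Real.exp (-l * (‖y‖ ^ 2 - θ)) - ε * wallFn D y) :
    HORegular D x := by
  intro β hβ hx
  have h1 := (fderiv_eq_and_le_iteratedFDeriv_of_isLocalMin hf x β η l θ _
    (isLocalMin_line_of_forall_le (e := β) (m := wallSlope D x β) hε.le hxr hmin fun s => by
      simpa only [wallSlope_smul] using wallFn_add_wallSlope_le D x (s • β))).1
  have h2 := (fderiv_eq_and_le_iteratedFDeriv_of_isLocalMin hf x β η l θ _
    (isLocalMin_line_of_forall_le (e := β) (m := wallSlope D x β + ⟪β, β⟫) hε.le hxr hmin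
      fun s => by
        simpa only [wallSlope_smul, inner_smul_right, mul_add] using
          wallFn_add_wallSlope_add_le D x (s • β) hβ hx)).1
  have h3 : 0 < ε * ⟪β, β⟫ := mul_pos hε (real_inner_self_pos.2 (D.root_ne_zero β hβ))
  linarith

lemma le_DOp_of_forall_le {δ : ℝ} (hf : ContDiff ℝ 2 f) (hx : HORegular D x) (hε : 0 ≤ ε)
    (hη : 0 ≤ η) (hl : 0 ≤ l) (hδ : 0 ≤ δ) (hδx : δ ≤ ‖x‖) (hxr : ‖x‖ < r)
    (hmin : ∀ y, ‖y‖ ≤ r → f x - η * Real.exp (-l * (‖x‖ ^ 2 - θ)) - ε * wallFn D x ≤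
      f y - η * Real.exp (-l * (‖y‖ ^ 2 - θ)) - ε * wallFn D y) :
    η * Real.exp (-l * (‖x‖ ^ 2 - θ)) * (2 * l ^ 2 * δ ^ 2
      - l * (Module.finrank ℝ E + ∑ α ∈ D.Rpos, D.k α * (2 + ‖α‖ * r))) ≤ DOp D f x := by
  set P := η * Real.exp (-l * (‖x‖ ^ 2 - θ)) with hP
  have hP0 : 0 ≤ P := by positivity
  have hline (e : E) := fderiv_eq_and_le_iteratedFDeriv_of_isLocalMin hf x e η l θ _
    (isLocalMin_line_of_forall_le (e := e) (m := wallSlope D x e) hε hxr hmin fun s => by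
      simpa only [wallSlope_smul] using wallFn_add_wallSlope_le D x (s • e))
  rw [← hP] at hline
  have hlap : P * (4 * l ^ 2 * δ ^ 2 - 2 * l * Module.finrank ℝ E) ≤ eucLap f x := by
    have h1 := Finset.sum_le_sum fun i (_ : i ∈ Finset.univ) =>
      (hline (stdOrthonormalBasis ℝ E i)).2
    refine le_trans ?_ h1
    have h2 := (stdOrthonormalBasis ℝ E).sum_sq_inner_left x
    simp only [OrthonormalBasis.norm_eq_one, ← Finset.mul_sum, Finset.sum_sub_distrib, h2]
    simp only [one_pow, mul_one, Finset.sum_const, Finset.card_univ, Fintype.card_fin,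
      nsmul_eq_mul]
    have h3 : δ ^ 2 ≤ ‖x‖ ^ 2 := by gcongr
    refine mul_le_mul_of_nonneg_left ?_ hP0
    nlinarith [sq_nonneg l]
  have hdrift : P * (-2 * l) * ∑ α ∈ D.Rpos, D.k α * (2 + ‖α‖ * r) ≤
      ∑ α ∈ D.Rpos, D.k α * cothR (⟪α, x⟫ / 2) * fderiv ℝ f x α := by
    rw [Finset.mul_sum]
    refine Finset.sum_le_sum fun α hα => ?_
    have hαR := D.pos_subset hα
    have hk := D.k_pos α hαR
    have h1 : cothR (⟪α, x⟫ / 2) * ⟪α, x⟫ ≤ 2 + ‖α‖ * r := by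
      have h2 := cothR_mul_self_le (⟪α, x⟫ / 2)
      have h3 : |⟪α, x⟫| ≤ ‖α‖ * r :=
        (abs_real_inner_le_norm α x).trans (by gcongr)
      rw [abs_div, abs_two] at h2
      linarith
    have h4 := cothR_mul_nonneg (inner_mul_wallSlope_nonneg D hαR x) (hx α hαR)
    rw [(hline α).1, real_inner_comm α x]
    have h5 : 0 ≤ P * (2 * l) * D.k α := by positivity
    have h6 := mul_le_mul_of_nonneg_left h1 h5
    have h7 : 0 ≤ D.k α * ε * (cothR (⟪α, x⟫ / 2) * wallSlope D x α) := by positivity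
    linarith
  have hrefl : ∑ α ∈ D.Rpos, D.k α * (‖α‖ ^ 2 / (4 * Real.sinh (⟪α, x⟫ / 2) ^ 2)) *
      (f x - f (rRefl α x)) ≤ 0 := by
    refine Finset.sum_nonpos fun α hα => ?_
    have hαR := D.pos_subset hα
    have hk := D.k_pos α hαR
    have h1 := hmin (rRefl α x) (by rw [norm_rRefl]; exact hxr.le)
    rw [norm_rRefl, wallFn_rRefl D hαR] at h1
    exact mul_nonpos_of_nonneg_of_nonpos (by positivity) (by linarith)
  rw [DOp, HOLap]
  linarith

end Barrier

/-- A continuous function that is positive on the compact set `{0} × [a, b]` has a positive lower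
bound on a tube around it. -/
lemma exists_pos_le_on_tube {u : E → ℝ → ℝ} {a b : ℝ} (hab : a ≤ b)
    (hcont : ContinuousOn (fun p : E × ℝ => u p.1 p.2) (Set.univ ×ˢ Set.Icc a b))
    (hpos : ∀ t ∈ Set.Icc a b, 0 < u 0 t) :
    ∃ δ > 0, ∃ c > 0, ∀ x : E, ‖x‖ ≤ δ → ∀ t ∈ Set.Icc a b, c ≤ u x t := by
  have hc0 : ContinuousOn (fun t => u 0 t) (Set.Icc a b) :=
    hcont.comp (f := fun t : ℝ => ((0 : E), t)) (by fun_prop) fun t ht => ⟨trivial, ht⟩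
  obtain ⟨τ, hτ, hmin⟩ := isCompact_Icc.exists_isMinOn (Set.nonempty_Icc.2 hab) hc0
  have hK : IsCompact (Metric.closedBall (0 : E) 1 ×ˢ Set.Icc a b) :=
    (isCompact_closedBall 0 1).prod isCompact_Icc
  have huc := hK.uniformContinuousOn_of_continuous
    (hcont.mono (Set.prod_mono_left (Set.subset_univ _)))
  obtain ⟨δ, hδ, h⟩ := Metric.uniformContinuousOn_iff.1 huc (u 0 τ / 2) (half_pos (hpos τ hτ))
  refine ⟨min 1 (δ / 2), by positivity, u 0 τ / 2, half_pos (hpos τ hτ), fun x hx t ht => ?_⟩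
  have h1 := h (x, t) ⟨by simpa using hx.trans (min_le_left _ _), ht⟩ (0, t) ⟨by simp, ht⟩
    (by
      have := hx.trans (min_le_right _ _)
      rw [Prod.dist_eq, dist_self, dist_zero_right]
      exact max_lt (by linarith) hδ)
  rw [Real.dist_eq] at h1
  have h2 : u 0 τ ≤ u 0 t := hmin ht
  linarith [(abs_lt.1 h1).1]

/-- strong minimum principle for the heat operator `H = ∂_t - D`. -/
theorem statement17 (D : HOData E) (t0 : ℝ) (u ut : E → ℝ → ℝ)
    (hcont : ContinuousOn (fun p : E × ℝ => u p.1 p.2) (Set.univ ×ˢ Set.Ici t0))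
    (hC2 : ∀ t, t0 < t → ContDiff ℝ 2 (fun x => u x t))
    (hC1t : ∀ x t, t0 < t → HasDerivAt (fun s => u x s) (ut x t) t)
    (hH : ∀ x t, HORegular D x → t0 < t → 0 ≤ ut x t - DOp D (fun y => u y t) x)
    (hnn : ∀ x t, t0 ≤ t → 0 ≤ u x t)
    (hpos : ∀ t, t0 ≤ t → 0 < u 0 t) :
    ∀ x t, t0 < t → 0 < u x t := by
  intro x₁ t₁ ht₁
  by_contra! hu
  obtain ⟨δ, hδ, c, hc, htube⟩ := exists_pos_le_on_tube ht₁.le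
    (hcont.mono (Set.prod_mono_right Set.Icc_subset_Ici_self)) fun t ht => hpos t ht.1
  have hT : 0 < t₁ - t0 := sub_pos.2 ht₁
  obtain ⟨r, hr, hr2⟩ : ∃ r : ℝ, 0 < r ∧ r ^ 2 = ‖x₁‖ ^ 2 + 1 :=
    ⟨√(‖x₁‖ ^ 2 + 1), by positivity, Real.sq_sqrt (by positivity)⟩
  set M := r ^ 2 / (t₁ - t0) with hM
  have hM0 : 0 < M := by positivity
  have hMt : M * (t₁ - t0) = r ^ 2 := by rw [hM]; field_simp
  set N := Module.finrank ℝ E + ∑ α ∈ D.Rpos, D.k α * (2 + ‖α‖ * r) with hN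
  have hN0 : 0 ≤ N := by
    have : ∀ α ∈ D.Rpos, 0 ≤ D.k α * (2 + ‖α‖ * r) := fun α hα =>
      mul_nonneg (D.k_pos α (D.pos_subset hα)).le (by positivity)
    exact add_nonneg (Nat.cast_nonneg _) (Finset.sum_nonneg this)
  set l := (M + N + 1) / (2 * δ ^ 2) with hl
  have hl0 : 0 < l := by positivity
  have hlδ : 2 * l * δ ^ 2 = M + N + 1 := by rw [hl]; field_simp
  set η := c * Real.exp (-l * r ^ 2) with hη
  have hη0 : 0 < η := by positivity
  set B := (∑ β ∈ D.R, ‖β‖) * r with hB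
  have hB0 : 0 ≤ B := mul_nonneg (Finset.sum_nonneg fun _ _ => norm_nonneg _) hr.le
  set ε := η * l / (B + 1) with hε
  have hε0 : 0 < ε := by positivity
  have hεB : ε * B < η * l := by
    rw [hε, div_mul_eq_mul_div, div_lt_iff₀ (by positivity)]
    nlinarith [mul_pos hη0 hl0]
  have hwall : ∀ x : E, ‖x‖ ≤ r → ε * wallFn D x ≤ ε * B := fun x hx =>
    mul_le_mul_of_nonneg_left ((wallFn_le D x).trans (mul_le_mul_of_nonneg_left hx
      (Finset.sum_nonneg fun _ _ => norm_nonneg _))) hε0.le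
  let F : E × ℝ → ℝ := fun p =>
    u p.1 p.2 - η * Real.exp (-l * (‖p.1‖ ^ 2 - M * (p.2 - t0))) - ε * wallFn D p.1
  have hK : IsCompact (Metric.closedBall (0 : E) r ×ˢ Set.Icc t0 t₁) :=
    (isCompact_closedBall 0 r).prod isCompact_Icc
  have hFc : ContinuousOn F (Metric.closedBall (0 : E) r ×ˢ Set.Icc t0 t₁) := by
    refine ((hcont.mono (Set.prod_mono (Set.subset_univ _) Set.Icc_subset_Ici_self)).sub ?_).sub ?_
    · fun_prop
    · exact (((continuous_wallFn D).comp continuous_fst).const_mul ε).continuousOn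
  have hx₁r : ‖x₁‖ ≤ r := by nlinarith [norm_nonneg x₁]
  have hmem₁ : (x₁, t₁) ∈ Metric.closedBall (0 : E) r ×ˢ Set.Icc t0 t₁ :=
    ⟨by simpa using hx₁r, ht₁.le, le_rfl⟩
  obtain ⟨⟨x, t⟩, ⟨hxb, ht⟩, hmin⟩ := hK.exists_isMinOn ⟨_, hmem₁⟩ hFc
  replace hmin : ∀ y s, ‖y‖ ≤ r → s ∈ Set.Icc t0 t₁ → F (x, t) ≤ F (y, s) := fun y s hy hs =>
    hmin (show (y, s) ∈ _ from ⟨by simpa using hy, hs⟩)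
  have hxr : ‖x‖ ≤ r := by simpa using hxb
  have hlow : F (x, t) < -η - ε * B := by
    refine (hmin x₁ t₁ hx₁r ⟨ht₁.le, le_rfl⟩).trans_lt ?_
    have h1 : -l * (‖x₁‖ ^ 2 - M * (t₁ - t0)) = l := by rw [hMt, hr2]; ring
    simp only [F, h1]
    have h2 := mul_le_mul_of_nonneg_left (Real.add_one_le_exp l) hη0.le
    have h3 := mul_nonneg hε0.le (wallFn_nonneg D x₁)
    linarith
  have hMts : M * (t - t0) ≤ r ^ 2 := by
    rw [← hMt]; exact mul_le_mul_of_nonneg_left (by linarith [ht.2]) hM0.le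
  have hψ : ‖x‖ ^ 2 < M * (t - t0) := by
    by_contra! hge
    have h1 : Real.exp (-l * (‖x‖ ^ 2 - M * (t - t0))) ≤ 1 :=
      Real.exp_le_one_iff.2 (by nlinarith)
    have h2 := mul_le_mul_of_nonneg_left h1 hη0.le
    have h3 := hnn x t ht.1
    have h4 := hwall x hxr
    simp only [F] at hlow
    linarith
  have htt : t0 < t := by
    by_contra! hle
    nlinarith [sq_nonneg ‖x‖]
  have hxr' : ‖x‖ < r := by nlinarith [norm_nonneg x]
  have hδx : δ ≤ ‖x‖ := by
    by_contra! hlt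
    have h1 := htube x hlt.le t ht
    have h2 : η * Real.exp (-l * (‖x‖ ^ 2 - M * (t - t0))) ≤ c := by
      rw [hη, mul_assoc, ← Real.exp_add]
      refine mul_le_of_le_one_right hc.le (Real.exp_le_one_iff.2 ?_)
      nlinarith [sq_nonneg ‖x‖]
    have h4 := hwall x hxr
    simp only [F] at hlow
    linarith
  have hminx : ∀ y, ‖y‖ ≤ r → F (x, t) ≤ F (y, t) := fun y hy => hmin y t hy ht
  have hreg : HORegular D x := hoRegular_of_forall_le (hC2 t htt) hε0 hxr' hminx
  have hD := le_DOp_of_forall_le (hC2 t htt) hreg hε0.le hη0.le hl0.le hδ.le hδx hxr' hminx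
  have hP : 0 < η * Real.exp (-l * (‖x‖ ^ 2 - M * (t - t0))) := by positivity
  have hd : HasDerivAt (fun s => F (x, s))
      (ut x t - η * (Real.exp (-l * (‖x‖ ^ 2 - M * (t - t0))) * (l * M))) t := by
    have h1 : HasDerivAt (fun s : ℝ => -l * (‖x‖ ^ 2 - M * (s - t0))) (l * M) t := by
      have := ((((hasDerivAt_id t).sub_const t0).const_mul M).const_sub (‖x‖ ^ 2)).const_mul (-l)
      exact this.congr_deriv (by ring)
    exact ((hC1t x t htt).sub (h1.exp.const_mul η)).sub_const (ε * wallFn D x)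
  have ht' := deriv_nonpos_of_forall_le htt hd fun s hs =>
    hmin x s hxr ⟨hs.1, hs.2.trans ht.2⟩
  have hheat := hH x t hreg htt
  rw [← hN] at hD
  have hcoef : 2 * l ^ 2 * δ ^ 2 - l * N = l * M + l := by linear_combination l * hlδ
  rw [hcoef] at hD
  linarith [mul_pos hP hl0]
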